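/- arXiv:1511.04538 — 5 statements merged into one kernel-verified Lean document; each statement's English description precedes it below -/
import Mathlib

section
/- The image Ā((ℤ/Nℤ)²) of (ℤ/Nℤ)² under the map induced by A has cardinality |det B| = N²/|det A|. -/
/-- The map on `(ℤ/Nℤ)²` induced by matrix–vector multiplication (mod `N`)
by an integer matrix `M`. -/
def matBar (N : ℕ) (M : Matrix (Fin 2) (Fin 2) ℤ) :
    (Fin 2 → ZMod N) → (Fin 2 → ZMod N) :=
  fun v => (M.map (Int.cast : ℤ → ZMod N)).mulVec v

/-!
Since `A` is injective on `ℤⁿ` and `A * B = N`, the condition `A v ∈ N ℤⁿ` says that `v ∈ B ℤⁿ`.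
So `B ℤⁿ` is the kernel of `v ↦ A v mod N`, and the image of this map, which is the image of
`A` mod `N`, has as many elements as `ℤⁿ / B ℤⁿ`, namely `|det B|`.
-/

open Matrix

section Reduction

variable {R : Type*} [CommSemiring R] (S : Type*) [Semiring S] [Algebra R S]
  {m n : Type*} [Fintype n]

/-- The `R`-linear map `v ↦ A v` followed by entrywise reduction along `algebraMap R S`; for
`R = ℤ` and `S = ZMod N` it is `v ↦ A v mod N`, with domain the lattice itself. -/
def mulVecReduction (A : Matrix m n R) : (n → R) →ₗ[R] (m → S) :=
  (Algebra.linearMap R S).compLeft m ∘ₗ A.mulVecLin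

theorem mulVecReduction_apply (A : Matrix m n R) (v : n → R) (i : m) :
    mulVecReduction S A v i = algebraMap R S ((A *ᵥ v) i) :=
  rfl

variable {S}

theorem range_mulVec_map_algebraMap (hS : Function.Surjective (algebraMap R S))
    (A : Matrix m n R) :
    Set.range (A.map (algebraMap R S)).mulVec = Set.range (mulVecReduction S A) := by
  have hcomp : (A.map (algebraMap R S)).mulVec ∘ (algebraMap R S ∘ ·) = mulVecReduction S A := by
    ext v i
    exact ((algebraMap R S).map_mulVec A v i).symm
  rw [← hcomp, hS.comp_left.range_comp]

theorem ker_mulVecReduction_eq_range [Fintype m] [DecidableEq m] {A : Matrix m n R}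
    {B : Matrix n m R} {c : R} (hS : RingHom.ker (algebraMap R S) = Ideal.span {c})
    (hA : Function.Injective A.mulVec) (hAB : A * B = c • (1 : Matrix m m R)) :
    LinearMap.ker (mulVecReduction S A) = LinearMap.range B.mulVecLin := by
  have hAB_mulVec (w : m → R) : A *ᵥ (B *ᵥ w) = c • w := by
    rw [mulVec_mulVec, hAB, smul_mulVec, one_mulVec]
  have mem_ker (v : n → R) : v ∈ LinearMap.ker (mulVecReduction S A) ↔ ∀ i, c ∣ (A *ᵥ v) i := by
    simp only [LinearMap.mem_ker, funext_iff, mulVecReduction_apply, Pi.zero_apply,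
      ← RingHom.mem_ker, hS, Ideal.mem_span_singleton]
  ext v
  rw [mem_ker, LinearMap.mem_range]
  constructor
  · intro hdvd
    choose w hw using hdvd
    exact ⟨w, hA ((hAB_mulVec w).trans (funext hw).symm)⟩
  · rintro ⟨w, rfl⟩ i
    exact ⟨w i, congrFun (hAB_mulVec w) i⟩

end Reduction

theorem card_quotient_range_eq_natAbs_det {M : Type*} [AddCommGroup M] [Module.Free ℤ M]
    [Module.Finite ℤ M] {f : M →ₗ[ℤ] M} (hf : Function.Injective f) :
    Nat.card (M ⧸ LinearMap.range f) = (LinearMap.det f).natAbs :=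
  (Submodule.natAbs_det_equiv _ (LinearEquiv.ofInjective f hf)).symm

theorem card_quotient_range_mulVecLin {n : Type*} [Fintype n] [DecidableEq n]
    {B : Matrix n n ℤ} (hB : B.det ≠ 0) :
    Nat.card ((n → ℤ) ⧸ LinearMap.range B.mulVecLin) = B.det.natAbs := by
  rw [card_quotient_range_eq_natAbs_det (mulVec_injective_of_det_ne_zero hB),
    ← toLin'_apply', LinearMap.det_toLin']

theorem det_mul_det_of_mul_eq_smul_one {R n : Type*} [CommRing R] [Fintype n] [DecidableEq n]
    {A B : Matrix n n R} {c : R} (hAB : A * B = c • (1 : Matrix n n R)) :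
    A.det * B.det = c ^ Fintype.card n := by
  rw [← det_mul, hAB, det_smul, det_one, mul_one]

theorem card_image_Abar_general {n : Type*} [Fintype n] [DecidableEq n] {N : ℕ} (hN : 0 < N)
    {A B : Matrix n n ℤ} (hAB : A * B = (N : ℤ) • (1 : Matrix n n ℤ)) :
    Nat.card (Set.range (A.map (Int.cast : ℤ → ZMod N)).mulVec) = B.det.natAbs ∧
      B.det.natAbs = N ^ Fintype.card n / A.det.natAbs := by
  have hdet : A.det * B.det = (N : ℤ) ^ Fintype.card n := det_mul_det_of_mul_eq_smul_one hAB
  obtain ⟨hA, hB⟩ : A.det ≠ 0 ∧ B.det ≠ 0 := by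
    rw [← mul_ne_zero_iff, hdet]
    positivity
  have hker : LinearMap.ker (mulVecReduction (ZMod N) A) = LinearMap.range B.mulVecLin :=
    ker_mulVecReduction_eq_range (ZMod.ker_intCastRingHom N)
      (mulVec_injective_of_det_ne_zero hA) hAB
  have hrange : Set.range (A.map (Int.cast : ℤ → ZMod N)).mulVec =
      Set.range (mulVecReduction (ZMod N) A) :=
    range_mulVec_map_algebraMap (S := ZMod N) ZMod.intCast_surjective A
  constructor
  · calc
      Nat.card (Set.range (A.map (Int.cast : ℤ → ZMod N)).mulVec)
      _ = Nat.card (LinearMap.range (mulVecReduction (ZMod N) A)) := by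
        rw [hrange, ← LinearMap.coe_range, SetLike.coe_sort_coe]
      _ = Nat.card ((n → ℤ) ⧸ LinearMap.range B.mulVecLin) := by
        rw [← hker]
        exact Nat.card_congr (mulVecReduction (ZMod N) A).quotKerEquivRange.symm.toEquiv
      _ = B.det.natAbs := card_quotient_range_mulVecLin hB
  · apply Nat.eq_div_of_mul_eq_right (Int.natAbs_ne_zero.mpr hA)
    rw [← Int.natAbs_mul, hdet, Int.natAbs_pow, Int.natAbs_natCast]

/-- Let `N` be a positive integer and `A` an invertible `2×2` real matrix with integer
entries (encoded as an integer matrix with nonzero determinant) such that `B := N·A⁻¹`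
also has integer entries (encoded as `A * B = N • 1`).  Then the image
`Ā((ℤ/Nℤ)²)` has cardinality `|det B| = N²/|det A|`. -/
theorem card_image_Abar (N : ℕ) (hN : 0 < N) (A B : Matrix (Fin 2) (Fin 2) ℤ)
    (hA : A.det ≠ 0) (hB : A * B = (N : ℤ) • (1 : Matrix (Fin 2) (Fin 2) ℤ)) :
    Nat.card (Set.range (matBar N A)) = B.det.natAbs ∧
      B.det.natAbs = N ^ 2 / A.det.natAbs :=
  card_image_Abar_general hN hB
end

section
/- Let q := |det A| ≥ 2 and let 𝔇 be a digit set for B. Then there exists a subset 𝔇₀ ⊆ (ℤ/Nℤ)² of cardinality q such that the map (α, k) ↦ α + Āk from 𝔇₀ × 𝔇 to (ℤ/Nℤ)² is a bijection; consequently the family {T_{Āk} e_α : α ∈ 𝔇₀, k ∈ 𝔇} coincides with the standard orthonormal basis {e_m : m ∈ (ℤ/Nℤ)²} of ℓ²(ℤ_N²), where e_j(n) = 1 if n = j and 0 otherwise. -/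
/-- `D` is a set of coset representatives for `B̄((ℤ/Nℤ)²)` in `(ℤ/Nℤ)²`
containing `0`: it contains exactly one representative of each coset. -/
def IsDigitRep (N : ℕ) (B : Matrix (Fin 2) (Fin 2) ℤ)
    (D : Finset (Fin 2 → ZMod N)) : Prop :=
  (0 : Fin 2 → ZMod N) ∈ D ∧
    ∀ v : Fin 2 → ZMod N, ∃! d, d ∈ D ∧ v - d ∈ Set.range (matBar N B)

/-- The translation operator `T_k` on `ℓ²(ℤ_N²)`: `(T_k f)(m) = f(m − k)`. -/
def transl (N : ℕ) (k : Fin 2 → ZMod N) (f : (Fin 2 → ZMod N) → ℂ) :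
    (Fin 2 → ZMod N) → ℂ :=
  fun m => f (m - k)

/-- The standard basis vector `e_j ∈ ℓ²(ℤ_N²)`: `e_j(n) = 1` if `n = j`, else `0`. -/
noncomputable def stdVec (N : ℕ) (j : Fin 2 → ZMod N) : (Fin 2 → ZMod N) → ℂ :=
  fun n => if n = j then 1 else 0

/-!
Since `A * B = N`, the lattice `A ℤⁿ` contains `N ℤⁿ`, so reduction modulo `N` preserves its index
in `ℤⁿ`, which is `|det A|`. Any transversal `D₀` of the image of `Ā` therefore has `|det A|`
elements. On the other hand `Ā B̄ = 0`, so representatives modulo the image of `B̄` already reach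
every value of `Ā`, and `Ā` maps a digit set bijectively onto its image.
-/

section Group

variable {G H : Type*} [AddGroup G] [AddGroup H]

theorem index_range_eq_of_comp_eq_comp {G' H' : Type*} [AddGroup G'] [AddGroup H'] {f : G' →+ G}
    {g : H' →+ H} {π' : G' →+ H'} {π : G →+ H} (hπ' : Function.Surjective π')
    (hπ : Function.Surjective π) (hcomm : g.comp π' = π.comp f) (hker : π.ker ≤ f.range) :
    g.range.index = f.range.index := by
  have hrange : f.range.map π = g.range := by
    rw [AddMonoidHom.map_range, ← hcomm, AddMonoidHom.range_comp,
      AddMonoidHom.range_eq_top.mpr hπ', ← AddMonoidHom.range_eq_map]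
  rw [← hrange, AddSubgroup.index_map_eq _ hπ hker]

theorem surjOn_range_of_forall_exists_sub_mem_ker {f : G →+ H} {D : Set G}
    (hD : ∀ v, ∃ d ∈ D, v - d ∈ f.ker) : Set.SurjOn f D f.range := by
  rintro _ ⟨v, rfl⟩
  obtain ⟨d, hd, hvd⟩ := hD v
  exact ⟨d, hd, (sub_eq_zero.mp ((map_sub f v d).symm.trans hvd)).symm⟩

theorem bijOn_add_of_isComplement {K : Type*} {S T : Set G} {D : Set K} {f : K → G}
    (hST : AddSubgroup.IsComplement S T) (hf : Set.BijOn f D T) :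
    Set.BijOn (fun p : G × K => p.1 + f p.2) (S ×ˢ D) Set.univ := by
  have hadd : Set.BijOn (fun p : G × G => p.1 + p.2) (S ×ˢ T) Set.univ := by
    refine ⟨Set.mapsTo_univ _ _, fun p hp p' hp' h => ?_, fun g _ => ?_⟩
    · have heq := @hST.1 (⟨p.1, hp.1⟩, ⟨p.2, hp.2⟩) (⟨p'.1, hp'.1⟩, ⟨p'.2, hp'.2⟩) h
      simpa only [Prod.ext_iff, Subtype.ext_iff] using heq
    · obtain ⟨⟨s, t⟩, rfl⟩ := hST.2 g
      exact ⟨(s, t), ⟨s.2, t.2⟩, rfl⟩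
  exact hadd.comp ((Set.bijOn_id S).prodMap hf)

theorem single_sub_eq_single_add {R : Type*} [DecidableEq G] [Zero R] (a k : G) (r : R) :
    (fun m => (Pi.single a r : G → R) (m - k)) = Pi.single (a + k) r := by
  ext m
  simp only [Pi.single_apply, sub_eq_iff_eq_add]

theorem setOf_translate_single_eq {R K : Type*} [DecidableEq G] [Zero R] {S : Set G} {D : Set K}
    {f : K → G} (h : Set.SurjOn (fun p : G × K => p.1 + f p.2) (S ×ˢ D) Set.univ) (r : R) :
    {e : G → R | ∃ a ∈ S, ∃ k ∈ D, e = fun m => (Pi.single a r : G → R) (m - f k)} =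
      {e | ∃ m, e = Pi.single m r} := by
  ext e
  simp only [single_sub_eq_single_add, Set.mem_ofPred_eq]
  constructor
  · rintro ⟨a, -, k, -, rfl⟩
    exact ⟨a + f k, rfl⟩
  · rintro ⟨m, rfl⟩
    obtain ⟨⟨a, k⟩, ⟨ha, hk⟩, rfl⟩ := h (Set.mem_univ m)
    exact ⟨a, ha, k, hk, rfl⟩

end Group

theorem index_range_eq_natAbs_det {M : Type*} [AddCommGroup M] [Module.Free ℤ M]
    [Module.Finite ℤ M] {f : M →ₗ[ℤ] M} (hf : Function.Injective f) :
    f.toAddMonoidHom.range.index = (LinearMap.det f).natAbs :=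
  (Submodule.natAbs_det_equiv (LinearMap.range f) (LinearEquiv.ofInjective f hf)).symm

section Matrix

open scoped Matrix

variable {ι : Type*} {N : ℕ}

/-- Coordinatewise reduction `ℤⁿ → (ℤ/Nℤ)ⁿ`. -/
def reduceMod (ι : Type*) (N : ℕ) : (ι → ℤ) →+ (ι → ZMod N) :=
  (Int.castAddHom (ZMod N)).compLeft ι

theorem reduceMod_surjective : Function.Surjective (reduceMod ι N) :=
  ZMod.intCast_surjective.comp_left

variable [Fintype ι]

/-- The endomorphism `M̄` of `(ℤ/Nℤ)ⁿ` induced by an integer matrix `M`; for `n = 2` its underlying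
function is `matBar N M`. -/
def matBarHom (N : ℕ) (M : Matrix ι ι ℤ) : (ι → ZMod N) →+ (ι → ZMod N) :=
  (M.map (Int.cast : ℤ → ZMod N)).mulVecLin.toAddMonoidHom

theorem matBarHom_comp_reduceMod (M : Matrix ι ι ℤ) :
    (matBarHom N M).comp (reduceMod ι N) = (reduceMod ι N).comp M.mulVecLin.toAddMonoidHom := by
  ext1 v
  exact funext fun i => (RingHom.map_mulVec (Int.castRingHom (ZMod N)) M v i).symm

variable [DecidableEq ι] {A B : Matrix ι ι ℤ}

theorem ker_reduceMod_le_range (hB : A * B = (N : ℤ) • (1 : Matrix ι ι ℤ)) :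
    (reduceMod ι N).ker ≤ A.mulVecLin.toAddMonoidHom.range := by
  intro v hv
  have hdvd : ∀ i, (N : ℤ) ∣ v i := fun i =>
    (ZMod.intCast_zmod_eq_zero_iff_dvd (v i) N).mp (congrFun hv i)
  choose c hc using hdvd
  refine ⟨B *ᵥ c, ?_⟩
  calc A *ᵥ B *ᵥ c = (N : ℤ) • c := by
        rw [Matrix.mulVec_mulVec, hB, Matrix.smul_mulVec, Matrix.one_mulVec]
    _ = v := (funext hc).symm

theorem index_range_matBarHom (hA : A.det ≠ 0) (hB : A * B = (N : ℤ) • (1 : Matrix ι ι ℤ)) :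
    (matBarHom N A).range.index = A.det.natAbs := by
  rw [index_range_eq_of_comp_eq_comp reduceMod_surjective reduceMod_surjective
    (matBarHom_comp_reduceMod A) (ker_reduceMod_le_range hB),
    index_range_eq_natAbs_det (Matrix.mulVec_injective_of_det_ne_zero hA),
    ← Matrix.toLin'_apply', LinearMap.det_toLin']

theorem range_matBarHom_le_ker (hB : A * B = (N : ℤ) • (1 : Matrix ι ι ℤ)) :
    (matBarHom N B).range ≤ (matBarHom N A).ker := by
  have hzero : A.map (Int.cast : ℤ → ZMod N) * B.map Int.cast = 0 := by
    rw [← Matrix.map_mul_intCast, hB]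
    ext i j
    simp only [Matrix.map_apply, Matrix.smul_apply, smul_eq_mul, Int.cast_mul, Int.cast_natCast,
      CharP.cast_eq_zero, zero_mul, Matrix.zero_apply]
  rintro _ ⟨w, rfl⟩
  change A.map (Int.cast : ℤ → ZMod N) *ᵥ B.map (Int.cast : ℤ → ZMod N) *ᵥ w = 0
  rw [Matrix.mulVec_mulVec, hzero, Matrix.zero_mulVec]

theorem bijOn_matBarHom_range (hB : A * B = (N : ℤ) • (1 : Matrix ι ι ℤ)) {D : Set (ι → ZMod N)}
    (hD : ∀ v, ∃ d ∈ D, v - d ∈ (matBarHom N B).range) (hinj : Set.InjOn (matBarHom N A) D) :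
    Set.BijOn (matBarHom N A) D (matBarHom N A).range := by
  refine ⟨fun v _ => ⟨v, rfl⟩, hinj, surjOn_range_of_forall_exists_sub_mem_ker fun v => ?_⟩
  obtain ⟨d, hd, hvd⟩ := hD v
  exact ⟨d, hd, range_matBarHom_le_ker hB hvd⟩

theorem standard_basis_from_digits_general {R : Type*} [Zero R] (r : R) (hA : A.det ≠ 0)
    (hB : A * B = (N : ℤ) • (1 : Matrix ι ι ℤ)) {D : Set (ι → ZMod N)}
    (hD : ∀ v, ∃ d ∈ D, v - d ∈ (matBarHom N B).range) (hinj : Set.InjOn (matBarHom N A) D) :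
    ∃ D₀ : Finset (ι → ZMod N),
      D₀.card = A.det.natAbs ∧
      Set.BijOn (fun p : (ι → ZMod N) × (ι → ZMod N) => p.1 + matBarHom N A p.2)
        (↑D₀ ×ˢ D) Set.univ ∧
      {f : (ι → ZMod N) → R | ∃ α ∈ D₀, ∃ k ∈ D,
          f = fun m => (Pi.single α r : (ι → ZMod N) → R) (m - matBarHom N A k)}
        = {f | ∃ m, f = Pi.single m r} := by
  have hindex := index_range_matBarHom hA hB
  have : (matBarHom N A).range.FiniteIndex := ⟨by rwa [hindex, Int.natAbs_ne_zero]⟩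
  obtain ⟨S, hS, -⟩ := (matBarHom N A).range.exists_isComplement_left 0
  lift S to Finset (ι → ZMod N) using hS.finite_left
  have hbij := bijOn_add_of_isComplement hS (bijOn_matBarHom_range hB hD hinj)
  exact ⟨S, by rw [← Set.ncard_coe_finset, hS.ncard_left, hindex], hbij,
    setOf_translate_single_eq hbij.surjOn r⟩

end Matrix

theorem stdVec_eq_single (N : ℕ) (j : Fin 2 → ZMod N) : stdVec N j = Pi.single j 1 :=
  funext fun n => (Pi.single_apply j 1 n).symm

/-- Let `q = |det A| ≥ 2` and let `𝔇` be a digit set for `B`.  Then there is a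
subset `𝔇₀ ⊆ (ℤ/Nℤ)²` with `|𝔇₀| = q` such that `(α, k) ↦ α + Āk` is a bijection
from `𝔇₀ × 𝔇` onto `(ℤ/Nℤ)²`, and consequently the family
`{T_{Āk} e_α : α ∈ 𝔇₀, k ∈ 𝔇}` coincides with the standard orthonormal basis
`{e_m : m ∈ (ℤ/Nℤ)²}` of `ℓ²(ℤ_N²)`. -/
theorem standard_basis_from_digits (N : ℕ) (hN : 0 < N)
    (A B : Matrix (Fin 2) (Fin 2) ℤ) (hA : A.det ≠ 0)
    (hB : A * B = (N : ℤ) • (1 : Matrix (Fin 2) (Fin 2) ℤ))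
    (hq : 2 ≤ A.det.natAbs)
    (D : Finset (Fin 2 → ZMod N)) (hD : IsDigitRep N B D)
    (hinj : Set.InjOn (matBar N A) D) :
    ∃ D₀ : Finset (Fin 2 → ZMod N),
      D₀.card = A.det.natAbs ∧
      Set.BijOn (fun p : (Fin 2 → ZMod N) × (Fin 2 → ZMod N) => p.1 + matBar N A p.2)
        (↑(D₀ ×ˢ D)) Set.univ ∧
      {f : (Fin 2 → ZMod N) → ℂ | ∃ α ∈ D₀, ∃ k ∈ D, f = transl N (matBar N A k) (stdVec N α)}
        = {f | ∃ m : Fin 2 → ZMod N, f = stdVec N m} := by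
  simp only [Finset.coe_product, stdVec_eq_single]
  exact standard_basis_from_digits_general 1 hA hB (fun v => (hD.2 v).exists) hinj
end

section
/- Let 𝔇 be a digit set for B and 𝔇* a digit set for C. Then for every k ∈ 𝔇, Σ_{m ∈ 𝔇*} e^{2πi⟨m, Ak⟩/N} equals |𝔇*| if k = 0 and equals 0 otherwise, where, in the exponent, m and k are represented by any integer lifts (the value e^{2πi⟨m, Ak⟩/N} is well defined since A has integer entries). -/
/-- The value `e^{2πi⟨m, Ak⟩/N}`, computed with integer lifts of `m` and `k`
(it is well defined since `A` has integer entries). -/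
noncomputable def expChar (N : ℕ) (A : Matrix (Fin 2) (Fin 2) ℤ)
    (m k : Fin 2 → ZMod N) : ℂ :=
  Complex.exp (2 * Real.pi * Complex.I *
    ((∑ i, ((m i).val : ℤ) * A.mulVec (fun j => ((k j).val : ℤ)) i : ℤ) : ℂ) / (N : ℂ))

/-!
The map `m ↦ e^{2πi⟨m, Ak⟩/N}` is an additive character of `(ℤ/Nℤ)²`. It is trivial on the range of
`B̄ᵀ`, because `⟨Bᵀw, Ak⟩ = ⟨w, BAk⟩` and `BA = N` vanishes modulo `N`. The sum over `𝔇*` is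
therefore the sum of a character over the quotient by that range, and it vanishes unless the
character is trivial, that is, unless `Āk = 0`; injectivity of `Ā` on `𝔇 ∋ 0` turns this into
`k = 0`.
-/

section CosetRepresentatives

variable {G : Type*} [AddGroup G] {H : AddSubgroup G} [H.Normal]

theorem bijective_quotientMk_of_existsUnique_sub_mem {S : Set G}
    (hS : ∀ v, ∃! d, d ∈ S ∧ v - d ∈ H) :
    Function.Bijective fun d : S ↦ (d : G ⧸ H) := by
  refine (Function.bijective_iff_existsUnique _).mpr fun q ↦ ?_
  induction q using QuotientAddGroup.induction_on with
  | H v =>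
    obtain ⟨d, ⟨hdS, hdv⟩, hd⟩ := hS v
    refine ⟨⟨d, hdS⟩, (QuotientAddGroup.eq_iff_sub_mem.mpr hdv).symm, fun e he ↦ ?_⟩
    exact Subtype.ext (hd e ⟨e.2, QuotientAddGroup.eq_iff_sub_mem.mp he.symm⟩)

theorem sum_addChar_eq_zero_of_existsUnique_sub_mem {R : Type*} [CommSemiring R] [IsDomain R]
    {S : Finset G} (hS : ∀ v, ∃! d, d ∈ S ∧ v - d ∈ H) {ψ : AddChar G R}
    (hψH : ∀ h ∈ H, ψ h = 1) (hψ : ψ ≠ 1) : ∑ d ∈ S, ψ d = 0 := by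
  have hbij : Function.Bijective fun d : S ↦ (d : G ⧸ H) :=
    bijective_quotientMk_of_existsUnique_sub_mem hS
  have : Fintype (G ⧸ H) := Fintype.ofBijective _ hbij
  let ψH : AddChar (G ⧸ H) R :=
    AddChar.toAddMonoidHomEquiv.symm (QuotientAddGroup.lift H ψ.toAddMonoidHom hψH)
  have hψH_ne : ψH ≠ 0 := by
    obtain ⟨g, hg⟩ := AddChar.ne_one_iff.mp hψ
    exact AddChar.ne_zero_iff.mpr ⟨g, hg⟩
  classical
  calc ∑ d ∈ S, ψ d = ∑ d : S, ψH (d : G) := (Finset.sum_coe_sort S ψ).symm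
    _ = ∑ q, ψH q := hbij.sum_comp ψH
    _ = 0 := (AddChar.sum_eq_ite ψH).trans (if_neg hψH_ne)

end CosetRepresentatives

section DotProduct

open scoped Matrix

variable {n R M : Type*} [Fintype n] [CommRing R] [CommMonoid M]

/-- The additive character `m ↦ ψ ⟨m, y⟩` of `Rⁿ` with frequency `y`, the ring version of
`m ↦ e^{2πi⟨m, y⟩/N}`. -/
def dotProductAddChar (ψ : AddChar R M) (y : n → R) : AddChar (n → R) M :=
  ψ.compAddMonoidHom ((dotProductBilin R R).flip y).toAddMonoidHom

@[simp]
theorem dotProductAddChar_apply (ψ : AddChar R M) (y m : n → R) :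
    dotProductAddChar ψ y m = ψ (m ⬝ᵥ y) := rfl

theorem dotProductAddChar_ne_one {ψ : AddChar R M} (hψ : ψ.IsPrimitive) {y : n → R}
    (hy : y ≠ 0) : dotProductAddChar ψ y ≠ 1 := by
  classical
  obtain ⟨i, hi⟩ := Function.ne_iff.mp hy
  obtain ⟨x, hx⟩ := AddChar.ne_one_iff.mp (hψ hi)
  refine AddChar.ne_one_iff.mpr ⟨Pi.single i x, ?_⟩
  rwa [dotProductAddChar_apply, single_dotProduct, mul_comm, ← AddChar.mulShift_apply]

theorem character_sum_digits_general {l m R' : Type*} [Fintype l] [Fintype m] [DecidableEq R]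
    [CommSemiring R'] [IsDomain R'] {ψ : AddChar R R'} (hψ : ψ.IsPrimitive)
    {A : Matrix n l R} {B : Matrix m n R} (hBA : B * A = 0) {S : Finset (n → R)}
    (hS : ∀ v, ∃! d, d ∈ S ∧ v - d ∈ Set.range (Bᵀ *ᵥ ·)) (k : l → R) :
    ∑ d ∈ S, ψ (d ⬝ᵥ A *ᵥ k) = if A *ᵥ k = 0 then (S.card : R') else 0 := by
  split_ifs with hAk
  · simp [hAk]
  have trivial_on_range : ∀ h ∈ Bᵀ.mulVecLin.range.toAddSubgroup,
      dotProductAddChar ψ (A *ᵥ k) h = 1 := by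
    rintro _ ⟨w, rfl⟩
    rw [dotProductAddChar_apply, Matrix.mulVecLin_apply, Matrix.mulVec_transpose,
      ← Matrix.dotProduct_mulVec, Matrix.mulVec_mulVec, hBA, Matrix.zero_mulVec, dotProduct_zero,
      AddChar.map_zero_eq_one]
  exact sum_addChar_eq_zero_of_existsUnique_sub_mem hS trivial_on_range
    (dotProductAddChar_ne_one hψ hAk)

end DotProduct

theorem mul_eq_of_isLeftRegular_of_commute {M : Type*} [Semigroup M] {a b c : M}
    (ha : IsLeftRegular a) (hac : Commute a c) (h : a * b = c) : b * a = c :=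
  ha <| calc a * (b * a) = c * a := by rw [← mul_assoc, h]
    _ = a * c := hac.symm

theorem mapMatrix_mul_mapMatrix_eq_zero_of_mul_eq_smul_one {n R R' : Type*} [Fintype n]
    [DecidableEq n] [CommRing R] [Semiring R'] {f : R →+* R'} {c : R} (hc : f c = 0)
    {A B : Matrix n n R} (hA : A.det ∈ nonZeroDivisors R) (hAB : A * B = c • 1) :
    f.mapMatrix B * f.mapMatrix A = 0 := by
  have hA_reg : IsLeftRegular A :=
    Matrix.isLeftRegular_iff_nonsingular.mpr (Matrix.nonsingular_iff_det_mem_nonZeroDivisors.mpr hA)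
  have hBA : B * A = c • 1 :=
    mul_eq_of_isLeftRegular_of_commute hA_reg ((Commute.one_right A).smul_right c) hAB
  rw [← map_mul, hBA]
  ext i j
  simp [hc]

theorem expChar_eq_stdAddChar (N : ℕ) [NeZero N] (A : Matrix (Fin 2) (Fin 2) ℤ)
    (m k : Fin 2 → ZMod N) :
    expChar N A m k = ZMod.stdAddChar (m ⬝ᵥ matBar N A k) := by
  have cast_exponent :
      ((∑ i, ((m i).val : ℤ) * A.mulVec (fun j ↦ ((k j).val : ℤ)) i : ℤ) : ZMod N) =
        m ⬝ᵥ matBar N A k := by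
    simp [matBar, dotProduct, Matrix.mulVec]
  rw [← cast_exponent, ZMod.stdAddChar_coe, expChar]

/-- Let `𝔇` be a digit set for `B` and `𝔇*` a digit set for `C = Bᵀ`.  Then for
every `k ∈ 𝔇`, the sum `Σ_{m ∈ 𝔇*} e^{2πi⟨m, Ak⟩/N}` equals `|𝔇*|` if `k = 0`
and `0` otherwise. -/
theorem character_sum_digits (N : ℕ) (hN : 0 < N) (A B : Matrix (Fin 2) (Fin 2) ℤ)
    (hA : A.det ≠ 0) (hB : A * B = (N : ℤ) • (1 : Matrix (Fin 2) (Fin 2) ℤ))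
    (D : Finset (Fin 2 → ZMod N)) (hD : IsDigitRep N B D)
    (hinj : Set.InjOn (matBar N A) D)
    (Dstar : Finset (Fin 2 → ZMod N)) (hDstar : IsDigitRep N B.transpose Dstar)
    (k : Fin 2 → ZMod N) (hk : k ∈ D) :
    ∑ m ∈ Dstar, expChar N A m k =
      if k = 0 then (Dstar.card : ℂ) else 0 := by
  have : NeZero N := ⟨hN.ne'⟩
  have hker : matBar N A k = 0 ↔ k = 0 := by
    simpa [matBar] using hinj.eq_iff hk hD.1
  simp only [expChar_eq_stdAddChar, ← hker]
  exact character_sum_digits_general (ZMod.isPrimitive_stdAddChar N)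
    (mapMatrix_mul_mapMatrix_eq_zero_of_mul_eq_smul_one (f := Int.castRingHom (ZMod N))
      (by simp) (mem_nonZeroDivisors_of_ne_zero hA) hB) hDstar.2 k
end

section
/- Let q := |det A| ≥ 2, let 𝔇 be a digit set for B, and let Φ = {φ₀,…,φ_{q−1}} ⊆ ℓ²(ℤ_N²). Fix any bijection γ : {0,…,q−1} → C̄((ℤ/Nℤ)²). Then 𝔅(Φ) = {T_{Āk} φ_p : k ∈ 𝔇, 0 ≤ p ≤ q−1} is an orthonormal basis of ℓ²(ℤ_N²) if and only if for every k ∈ (ℤ/Nℤ)² the q×q matrix S(k) with entries S(k)_{j,p} = (1/√q)·φ̂_p(k + γ(j)) (rows indexed by j, columns by p) is unitary. -/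
/-- The discrete Fourier transform on `ℓ²(ℤ_N²)`:
`f̂(m) = Σ_s f(s)·e^{−2πi⟨m,s⟩/N}`, computed with integer lifts in the exponent. -/
noncomputable def dft (N : ℕ) [NeZero N] (f : (Fin 2 → ZMod N) → ℂ)
    (m : Fin 2 → ZMod N) : ℂ :=
  ∑ s : Fin 2 → ZMod N, f s *
    Complex.exp (-(2 * Real.pi * Complex.I) *
      ((∑ i, ((m i).val : ℤ) * ((s i).val : ℤ) : ℤ) : ℂ) / (N : ℂ))

/-- The inner product on `ℓ²(ℤ_N²)`: `⟨f, g⟩ = Σ_n f(n)·conj(g(n))`. -/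
noncomputable def ip (N : ℕ) [NeZero N] (f g : (Fin 2 → ZMod N) → ℂ) : ℂ :=
  ∑ n : Fin 2 → ZMod N, f n * (starRingEnd ℂ) (g n)

/-- A family `b` indexed by `ι` is an orthonormal basis of `ℓ²(ℤ_N²)`:
it is orthonormal and spans the whole space. -/
def IsONB (N : ℕ) [NeZero N] {ι : Type*} [Fintype ι] [DecidableEq ι]
    (b : ι → ((Fin 2 → ZMod N) → ℂ)) : Prop :=
  (∀ i j, ip N (b i) (b j) = if i = j then 1 else 0) ∧
    Submodule.span ℂ (Set.range b) = ⊤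

/-!
The map `Ā` identifies the digit set `𝔇` with the subgroup `H` that is the image of `Ā`, because
`A B = N` makes the image of `B̄` the kernel of `Ā`. Transposing, the image of `C̄` is the kernel of
the transpose of `Ā`, which under `m ↦ e^{2πi⟨m,·⟩/N}` is the annihilator of `H` in the group of
characters. By Poisson summation, the entries of `S(k)ᴴ S(k)` are the Fourier coefficients, at `k`,
of the correlations `h ↦ ⟨T_h φ_p, φ_p'⟩` on `H`. Hence `S(k)ᴴ S(k) = 1` for all `k` exactly when
each correlation is `δ_{p,p'}` times the point mass at `0`, which is orthonormality of the
translates; there are `|H| |H^⊥| = N²` of them, so they then form a basis.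
-/

open Matrix WithLp
open scoped translate ComplexConjugate

section FiniteAbelianGroup

variable {G : Type*} [AddCommGroup G]

/-- The annihilator of a subgroup `H` of `G` in the group of complex characters of `G`
(written additively, as `AddChar` allows). -/
def charAnnihilator (H : AddSubgroup G) : AddSubgroup (AddChar G ℂ) where
  carrier := {ψ | ∀ h ∈ H, ψ h = 1}
  zero_mem' _ _ := rfl
  add_mem' hψ hχ h hh := by rw [AddChar.add_apply, hψ h hh, hχ h hh, one_mul]
  neg_mem' hψ h hh := hψ (-h) (H.neg_mem hh)

theorem mem_charAnnihilator {H : AddSubgroup G} {ψ : AddChar G ℂ} :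
    ψ ∈ charAnnihilator H ↔ ∀ h ∈ H, ψ h = 1 :=
  Iff.rfl

open Classical in
theorem sum_addSubgroup_apply_eq_ite (H : AddSubgroup G) [Fintype H] (ψ : AddChar G ℂ) :
    ∑ h : H, ψ h = if ψ ∈ charAnnihilator H then (Fintype.card H : ℂ) else 0 := by
  have restrict_eq_zero_iff :
      ψ.compAddMonoidHom H.subtype = 0 ↔ ψ ∈ charAnnihilator H := by
    simp [AddChar.eq_zero_iff, mem_charAnnihilator]
  simpa [restrict_eq_zero_iff] using (ψ.compAddMonoidHom H.subtype).sum_eq_ite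

theorem card_mul_card_charAnnihilator [Finite G] (H : AddSubgroup G) :
    Nat.card H * Nat.card (charAnnihilator H) = Nat.card G := by
  classical
  have := Fintype.ofFinite G
  have double_count : ∑ ψ : AddChar G ℂ, ∑ h : H, ψ h = ∑ h : H, ∑ ψ : AddChar G ℂ, ψ h :=
    Finset.sum_comm
  simp only [sum_addSubgroup_apply_eq_ite, AddChar.sum_apply_eq_ite, ZeroMemClass.coe_eq_zero,
    Finset.sum_ite_eq', Finset.mem_univ, if_true, ← Finset.sum_filter, Finset.sum_const,
    nsmul_eq_mul, ← Fintype.card_subtype] at double_count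
  simp_rw [Nat.card_eq_fintype_card, mul_comm (Fintype.card H)]
  exact_mod_cast double_count

theorem sum_sum_addSubgroup_mul_apply [Fintype G] (H : AddSubgroup G) [Fintype H] (F : H → ℂ)
    (a : H) :
    ∑ ψ : AddChar G ℂ, (∑ h : H, F h * ψ h) * ψ (-a) = Fintype.card G * F a := by
  classical
  calc ∑ ψ : AddChar G ℂ, (∑ h : H, F h * ψ h) * ψ (-a)
    _ = ∑ h : H, F h * ∑ ψ : AddChar G ℂ, ψ (h - a) := by
      simp_rw [Finset.sum_mul, Finset.mul_sum, sub_eq_add_neg, AddChar.map_add_eq_mul, mul_assoc]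
      exact Finset.sum_comm
    _ = Fintype.card G * F a := by
      simp [AddChar.sum_apply_eq_ite, sub_eq_zero, mul_comm]

theorem forall_eq_ite_iff_forall_sum_mul_apply_eq [Finite G] (H : AddSubgroup G) [Fintype H]
    [DecidableEq H] (F : H → ℂ) (c : ℂ) :
    (∀ h, F h = if h = 0 then c else 0) ↔ ∀ ψ : AddChar G ℂ, ∑ h : H, F h * ψ h = c := by
  classical
  have := Fintype.ofFinite G
  refine ⟨fun hF ψ => by simp [hF], fun hF a => ?_⟩
  have inversion := sum_sum_addSubgroup_mul_apply H F a
  simp_rw [hF, ← Finset.mul_sum, AddChar.sum_apply_eq_ite, neg_eq_zero,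
    ZeroMemClass.coe_eq_zero] at inversion
  refine mul_left_cancel₀ (Nat.cast_ne_zero.mpr Fintype.card_ne_zero) (inversion.symm.trans ?_)
  split_ifs <;> ring

variable [Fintype G]

/-- The unnormalised Fourier transform on a finite abelian group, as a function of the character
(`AddChar.map_neg_eq_conj` identifies `ψ (-x)` with the conjugate of `ψ x`). -/
noncomputable def charDFT (f : G → ℂ) (ψ : AddChar G ℂ) : ℂ :=
  ∑ x, f x * ψ (-x)

theorem charDFT_translate (a : G) (f : G → ℂ) (ψ : AddChar G ℂ) :
    charDFT (τ a f) ψ = ψ (-a) * charDFT f ψ := by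
  rw [charDFT, charDFT, Finset.mul_sum]
  refine Fintype.sum_equiv (Equiv.subRight a) _ _ fun x => ?_
  have : -x = -a + -(x - a) := by abel
  rw [this, AddChar.map_add_eq_mul, translate_apply, Equiv.subRight_apply, mul_left_comm]

theorem charDFT_dotProduct_star_charDFT (f g : G → ℂ) :
    charDFT f ⬝ᵥ star (charDFT g) = Fintype.card G * (f ⬝ᵥ star g) := by
  classical
  have expand (ψ : AddChar G ℂ) : charDFT f ψ * conj (charDFT g ψ) =
      ∑ x, ∑ y, f x * conj (g y) * ψ (y - x) := by
    simp_rw [charDFT, map_sum, Finset.sum_mul_sum, map_mul, ← AddChar.map_neg_eq_conj, neg_neg,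
      sub_eq_neg_add, AddChar.map_add_eq_mul, mul_mul_mul_comm]
  calc charDFT f ⬝ᵥ star (charDFT g)
    _ = ∑ x, ∑ y, f x * conj (g y) * ∑ ψ : AddChar G ℂ, ψ (y - x) := by
      simp_rw [Finset.mul_sum]
      refine (Finset.sum_congr rfl fun ψ _ => expand ψ).trans (Finset.sum_comm.trans ?_)
      exact Finset.sum_congr rfl fun x _ => Finset.sum_comm
    _ = Fintype.card G * (f ⬝ᵥ star g) := by
      simp [AddChar.sum_apply_eq_ite, sub_eq_zero, dotProduct, Finset.mul_sum, mul_comm]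

theorem translate_dotProduct_star_translate (a b : G) (f g : G → ℂ) :
    τ a f ⬝ᵥ star (τ b g) = τ (a - b) f ⬝ᵥ star g :=
  Fintype.sum_equiv (Equiv.subRight b) _ _ fun x => by simp [sub_sub_sub_cancel_right]

theorem sum_charDFT_mul_conj_charDFT_mul_apply_neg (f g : G → ℂ) (a : G) :
    ∑ χ, charDFT f χ * conj (charDFT g χ) * χ (-a) = Fintype.card G * (τ a f ⬝ᵥ star g) := by
  rw [← charDFT_dotProduct_star_charDFT]
  exact Finset.sum_congr rfl fun χ _ => by
    rw [charDFT_translate, Pi.star_apply, RCLike.star_def]; ring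

/-- Poisson summation for the correlation `a ↦ ⟨τ a f, g⟩` along the subgroup `H`. -/
theorem card_mul_sum_translate_dotProduct_mul_apply (H : AddSubgroup G) [Fintype H]
    [Fintype (charAnnihilator H)] (f g : G → ℂ) (ψ : AddChar G ℂ) :
    Fintype.card (charAnnihilator H) * ∑ h : H, (τ (h : G) f ⬝ᵥ star g) * ψ h =
      ∑ χ : charAnnihilator H, charDFT f (ψ + χ) * conj (charDFT g (ψ + χ)) := by
  classical
  set F : AddChar G ℂ → ℂ := fun χ => charDFT f χ * conj (charDFT g χ) with hF
  have hcard : (Fintype.card H * Fintype.card (charAnnihilator H) : ℂ) = Fintype.card G := by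
    have := card_mul_card_charAnnihilator H
    simp_rw [Nat.card_eq_fintype_card] at this
    exact_mod_cast this
  have sum_translate_annihilator : ∑ χ, F χ * (if ψ - χ ∈ charAnnihilator H then 1 else 0) =
      ∑ χ : charAnnihilator H, F (ψ + χ) := by
    rw [← Equiv.sum_comp (Equiv.addLeft ψ)]
    simpa [← Finset.sum_filter] using Finset.sum_subtype _ (by simp) _
  have hH : (Fintype.card H : ℂ) ≠ 0 := Nat.cast_ne_zero.mpr Fintype.card_ne_zero
  refine mul_left_cancel₀ hH ?_
  calc (Fintype.card H : ℂ) * (Fintype.card (charAnnihilator H) *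
          ∑ h : H, (τ (h : G) f ⬝ᵥ star g) * ψ h)
    _ = ∑ h : H, (∑ χ, F χ * χ (-h)) * ψ h := by
      rw [← mul_assoc, hcard, Finset.mul_sum]
      simp_rw [hF, sum_charDFT_mul_conj_charDFT_mul_apply_neg, mul_assoc]
    _ = ∑ χ, F χ * ∑ h : H, (ψ - χ) h := by
      simp_rw [Finset.sum_mul, Finset.mul_sum, AddChar.sub_apply, mul_assoc, mul_comm (ψ _)]
      exact Finset.sum_comm
    _ = Fintype.card H * ∑ χ : charAnnihilator H, F (ψ + χ) := by
      rw [← sum_translate_annihilator, Finset.mul_sum]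
      simp_rw [sum_addSubgroup_apply_eq_ite, mul_left_comm _ (F _), mul_ite, mul_one, mul_zero]

section SystemMatrix

variable {I J P : Type*} [Fintype J] {H : AddSubgroup G}

/-- The system matrix of the functions `φ p` at the character `ψ`, for a family `γ` of characters;
its rows sample the transforms along the translate by `ψ` of that family. -/
noncomputable def systemMatrix (φ : P → G → ℂ) (γ : J → AddChar G ℂ) (ψ : AddChar G ℂ) :
    Matrix J P ℂ :=
  of fun j p => (1 / Real.sqrt (Fintype.card J) : ℂ) * charDFT (φ p) (ψ + γ j)

theorem conjTranspose_mul_systemMatrix_apply [Fintype H] (γ : J ≃ charAnnihilator H)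
    (φ : P → G → ℂ) (ψ : AddChar G ℂ) (p p' : P) :
    ((systemMatrix φ (fun j => γ j) ψ)ᴴ * systemMatrix φ (fun j => γ j) ψ) p' p =
      ∑ h : H, (τ (h : G) (φ p) ⬝ᵥ star (φ p')) * ψ h := by
  have := Fintype.ofEquiv J γ
  have : Nonempty J := ⟨γ.symm 0⟩
  have hJ : (Fintype.card J : ℂ) ≠ 0 := Nat.cast_ne_zero.mpr Fintype.card_ne_zero
  have hsqrt : (Real.sqrt (Fintype.card J) : ℂ) ^ 2 = Fintype.card J := by
    rw [← Complex.ofReal_pow, Real.sq_sqrt (Nat.cast_nonneg _), Complex.ofReal_natCast]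
  refine mul_left_cancel₀ hJ ?_
  calc Fintype.card J *
          ((systemMatrix φ (fun j => γ j) ψ)ᴴ * systemMatrix φ (fun j => γ j) ψ) p' p
    _ = ∑ j, charDFT (φ p) (ψ + γ j) * conj (charDFT (φ p') (ψ + γ j)) := by
      rw [mul_apply, Finset.mul_sum]
      refine Finset.sum_congr rfl fun j _ => ?_
      simp only [systemMatrix, conjTranspose_apply, of_apply, star_mul', RCLike.star_def, map_div₀,
        map_one, Complex.conj_ofReal]
      rw [← hsqrt] at hJ ⊢
      field_simp [pow_ne_zero_iff two_ne_zero |>.mp hJ]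
    _ = ∑ χ : charAnnihilator H, charDFT (φ p) (ψ + χ) * conj (charDFT (φ p') (ψ + χ)) :=
      γ.sum_comp fun χ => charDFT (φ p) (ψ + χ) * conj (charDFT (φ p') (ψ + χ))
    _ = Fintype.card J * ∑ h : H, (τ (h : G) (φ p) ⬝ᵥ star (φ p')) * ψ h := by
      rw [← card_mul_sum_translate_dotProduct_mul_apply, Fintype.card_congr γ]

theorem orthonormal_translate_iff_forall_dotProduct_eq_ite [DecidableEq P] [DecidableEq H]
    (α : I ≃ H) (φ : P → G → ℂ) :
    Orthonormal ℂ (fun i : I × P => toLp 2 (τ (α i.1 : G) (φ i.2))) ↔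
      ∀ p p' (h : H), τ (h : G) (φ p) ⬝ᵥ star (φ p') =
        if h = 0 then (1 : Matrix P P ℂ) p' p else 0 := by
  classical
  simp_rw [orthonormal_iff_ite, EuclideanSpace.inner_toLp_toLp,
    translate_dotProduct_star_translate, ← AddSubgroup.coe_sub, Prod.forall, Prod.mk.injEq, ite_and]
  refine ⟨fun hφ p p' h => ?_, fun hφ i p' j p => ?_⟩
  · simpa [Equiv.symm_apply_eq, Equiv.eq_symm_apply, one_apply, eq_comm] using
      hφ (α.symm 0) p' (α.symm h) p
  · simp only [hφ, one_apply, sub_eq_zero, α.injective.eq_iff, eq_comm (a := i)]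

theorem orthonormal_translate_iff_forall_conjTranspose_mul_systemMatrix [DecidableEq P]
    (α : I ≃ H) (γ : J ≃ charAnnihilator H) (φ : P → G → ℂ) :
    Orthonormal ℂ (fun i : I × P => toLp 2 (τ (α i.1 : G) (φ i.2))) ↔
      ∀ ψ, (systemMatrix φ (fun j => γ j) ψ)ᴴ * systemMatrix φ (fun j => γ j) ψ = 1 := by
  classical
  have := Fintype.ofFinite H
  simp_rw [orthonormal_translate_iff_forall_dotProduct_eq_ite,
    forall_eq_ite_iff_forall_sum_mul_apply_eq, ← conjTranspose_mul_systemMatrix_apply γ,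
    ← Matrix.ext_iff]
  exact ⟨fun hφ ψ p' p => hφ p p' ψ, fun hφ p p' ψ => hφ ψ p' p⟩

end SystemMatrix

theorem exists_orthonormalBasis_iff_orthonormal {𝕜 E ι : Type*} [RCLike 𝕜] [NormedAddCommGroup E]
    [InnerProductSpace 𝕜 E] [FiniteDimensional 𝕜 E] [Fintype ι]
    (hcard : Fintype.card ι = Module.finrank 𝕜 E) (b : ι → E) :
    (∃ v : OrthonormalBasis ι 𝕜 E, ⇑v = b) ↔ Orthonormal 𝕜 b := by
  refine ⟨?_, fun hb => ?_⟩
  · rintro ⟨v, rfl⟩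
    exact v.orthonormal
  · have hspan := hb.linearIndependent.span_eq_top_of_card_eq_finrank' hcard
    exact ⟨.mk hb hspan.ge, OrthonormalBasis.coe_mk hb hspan.ge⟩

theorem onws_iff_system_matrix_unitary_general {I P : Type*} [Fintype I] [Fintype P]
    [DecidableEq P] {H : AddSubgroup G} {α : I → G} (hα : Function.Injective α)
    (hαH : Set.range α = H) {γ : P → AddChar G ℂ} (hγ : Function.Injective γ)
    (hγH : Set.range γ = charAnnihilator H) (φ : P → G → ℂ) :
    (∃ v : OrthonormalBasis (I × P) ℂ (EuclideanSpace ℂ G),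
        ⇑v = fun i => toLp 2 (τ (α i.1) (φ i.2))) ↔
      ∀ ψ, systemMatrix φ γ ψ ∈ unitaryGroup P ℂ := by
  let α' : I ≃ H := (Equiv.ofInjective α hα).trans (Equiv.setCongr hαH)
  let γ' : P ≃ charAnnihilator H := (Equiv.ofInjective γ hγ).trans (Equiv.setCongr hγH)
  have hcard : Fintype.card (I × P) = Module.finrank ℂ (EuclideanSpace ℂ G) := by
    rw [finrank_euclideanSpace, ← Nat.card_eq_fintype_card, ← Nat.card_eq_fintype_card,
      Nat.card_prod, Nat.card_congr α', Nat.card_congr γ', card_mul_card_charAnnihilator]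
  simp_rw [exists_orthonormalBasis_iff_orthonormal hcard, mem_unitaryGroup_iff',
    star_eq_conjTranspose]
  exact orthonormal_translate_iff_forall_conjTranspose_mul_systemMatrix α' γ' φ

end FiniteAbelianGroup

section DotProductChar

variable {R ι κ : Type*} [CommRing R] [Fintype ι] [Fintype κ]

/-- The character `s ↦ e (m ⬝ᵥ s)` of `ι → R` attached to a vector `m` and a character `e` of `R`,
as a homomorphism in `m`. -/
def dotProductChar (e : AddChar R ℂ) : (ι → R) →+ AddChar (ι → R) ℂ where
  toFun m :=
    { toFun s := e (m ⬝ᵥ s)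
      map_zero_eq_one' := by simp
      map_add_eq_mul' s t := by rw [dotProduct_add, AddChar.map_add_eq_mul] }
  map_zero' := by ext; simp
  map_add' m m' := by ext s; simp [add_dotProduct, AddChar.map_add_eq_mul]

theorem dotProductChar_apply (e : AddChar R ℂ) (m s : ι → R) :
    dotProductChar e m s = e (m ⬝ᵥ s) :=
  rfl

theorem dotProductChar_injective {e : AddChar R ℂ} (he : e.IsPrimitive) :
    Function.Injective (dotProductChar e : (ι → R) →+ AddChar (ι → R) ℂ) := by
  classical
  rw [injective_iff_map_eq_zero]
  refine fun m hm => funext fun i => by_contra fun hi => he hi ?_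
  ext r
  simpa [dotProductChar_apply] using DFunLike.congr_fun hm (Pi.single i r)

theorem dotProductChar_bijective [Finite R] {e : AddChar R ℂ} (he : e.IsPrimitive) :
    Function.Bijective (dotProductChar e : (ι → R) →+ AddChar (ι → R) ℂ) := by
  classical
  have := Fintype.ofFinite R
  exact (Fintype.bijective_iff_injective_and_card _).mpr
    ⟨dotProductChar_injective he, AddChar.card_eq.symm⟩

theorem dotProductChar_mem_charAnnihilator_range_iff {e : AddChar R ℂ} (he : e.IsPrimitive)
    (M : Matrix ι κ R) (m : ι → R) :
    dotProductChar e m ∈ charAnnihilator M.mulVecLin.toAddMonoidHom.range ↔ Mᵀ *ᵥ m = 0 := by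
  rw [← map_eq_zero_iff _ (dotProductChar_injective he), AddChar.eq_zero_iff]
  simp [mem_charAnnihilator, dotProductChar_apply, mulVec_transpose, dotProduct_mulVec]

end DotProductChar

section ReductionModulo

variable {R S n : Type*} [CommRing R] [CommRing S] [Fintype n] [DecidableEq n] {c : R}
  {A B : Matrix n n R}

theorem mul_eq_smul_one_comm (hc : IsLeftRegular c) (h : A * B = c • (1 : Matrix n n R)) :
    B * A = c • (1 : Matrix n n R) := by
  have hdet : IsLeftRegular A.det := by
    refine IsLeftRegular.of_mul (a := B.det) ?_
    rw [mul_comm, ← det_mul, h, det_smul, det_one, mul_one]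
    exact hc.pow _
  refine (isRegular_of_isLeftRegular_det hdet).left ?_
  simp [← mul_assoc, h]

theorem exact_mulVec_map_of_mul_eq_smul_one (hc : IsLeftRegular c)
    (h : A * B = c • (1 : Matrix n n R)) {f : R →+* S} (hf : Function.Surjective f)
    (hker : RingHom.ker f = Ideal.span {c}) :
    Function.Exact (B.map f).mulVec (A.map f).mulVec := by
  have map_mulVec (M : Matrix n n R) (v : n → R) : M.map f *ᵥ (f ∘ v) = f ∘ (M *ᵥ v) :=
    (funext fun i => f.map_mulVec M v i).symm
  intro x
  constructor
  · intro hx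
    obtain ⟨y, rfl⟩ := hf.comp_left x
    have hdvd (i : n) : c ∣ (A *ᵥ y) i := by
      rw [← Ideal.mem_span_singleton, ← hker]
      exact congrFun ((map_mulVec A y).symm.trans hx) i
    choose w hw using hdvd
    have hy : y = B *ᵥ w := by
      have hAy : A *ᵥ y = c • w := funext hw
      have hcy : c • y = c • B *ᵥ w := by
        rw [← mulVec_smul, ← hAy, mulVec_mulVec, mul_eq_smul_one_comm hc h, smul_mulVec,
          one_mulVec]
      exact funext fun i => hc (congrFun hcy i)
    exact ⟨f ∘ w, by rw [map_mulVec, ← hy]⟩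
  · rintro ⟨w, rfl⟩
    obtain ⟨v, rfl⟩ := hf.comp_left w
    have hfc : f c = 0 := by
      rw [← RingHom.mem_ker, hker]
      exact Ideal.mem_span_singleton_self c
    rw [map_mulVec, map_mulVec, mulVec_mulVec, h, smul_mulVec, one_mulVec]
    ext i
    simp [hfc]

end ReductionModulo

section Plane

variable {N : ℕ} {A B : Matrix (Fin 2) (Fin 2) ℤ}

theorem IsDigitRep.range_matBar {D : Finset (Fin 2 → ZMod N)} (hD : IsDigitRep N B D)
    (hexact : Function.Exact (matBar N B) (matBar N A)) :
    Set.range (fun k : D => matBar N A k) = Set.range (matBar N A) := by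
  refine (Set.range_comp_subset_range _ _).antisymm ?_
  rintro _ ⟨v, rfl⟩
  obtain ⟨d, ⟨hd, hvd⟩, -⟩ := hD.2 v
  refine ⟨⟨d, hd⟩, (sub_eq_zero.mp ?_).symm⟩
  rw [← (hexact _).mpr hvd]
  exact (mulVec_sub _ _ _).symm

variable [NeZero N]

theorem exact_matBar (h : A * B = (N : ℤ) • (1 : Matrix (Fin 2) (Fin 2) ℤ)) :
    Function.Exact (matBar N B) (matBar N A) :=
  exact_mulVec_map_of_mul_eq_smul_one
    (IsRegular.of_ne_zero (Nat.cast_ne_zero.mpr (NeZero.ne N))).left h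
    (f := Int.castRingHom (ZMod N)) (ZMod.ringHom_surjective _) (ZMod.ker_intCastRingHom N)

theorem exact_matBar_transpose (h : A * B = (N : ℤ) • (1 : Matrix (Fin 2) (Fin 2) ℤ)) :
    Function.Exact (matBar N Bᵀ) (matBar N Aᵀ) := by
  apply exact_matBar
  have hN : IsLeftRegular (N : ℤ) :=
    (IsRegular.of_ne_zero (Nat.cast_ne_zero.mpr (NeZero.ne N))).left
  rw [← transpose_mul, mul_eq_smul_one_comm hN h, transpose_smul, transpose_one]

theorem dotProductChar_image_range_matBar_transpose
    (h : A * B = (N : ℤ) • (1 : Matrix (Fin 2) (Fin 2) ℤ)) :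
    dotProductChar ZMod.stdAddChar '' Set.range (matBar N Bᵀ) =
      charAnnihilator (A.map (Int.cast : ℤ → ZMod N)).mulVecLin.toAddMonoidHom.range := by
  have he := ZMod.isPrimitive_stdAddChar N
  ext ψ
  obtain ⟨m, rfl⟩ := (dotProductChar_bijective he).surjective ψ
  rw [(dotProductChar_injective he).mem_set_image, SetLike.mem_coe,
    dotProductChar_mem_charAnnihilator_range_iff he]
  exact (exact_matBar_transpose h m).symm

theorem dft_eq_charDFT (f : (Fin 2 → ZMod N) → ℂ) (m : Fin 2 → ZMod N) :
    dft N f m = charDFT f (dotProductChar ZMod.stdAddChar m) := by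
  refine Finset.sum_congr rfl fun s _ => congrArg (f s * ·) ?_
  have hdot : m ⬝ᵥ (-s) = ((-(∑ i, ((m i).val : ℤ) * ((s i).val : ℤ)) : ℤ) : ZMod N) := by
    simp [dotProduct]
  rw [dotProductChar_apply, hdot, ZMod.stdAddChar_coe]
  congr 1
  push_cast
  ring

theorem forall_systemMatrix_mem_unitaryGroup_iff_forall_dft {q : ℕ}
    (φ : Fin q → (Fin 2 → ZMod N) → ℂ) (γ : Fin q → Fin 2 → ZMod N) :
    (∀ ψ, systemMatrix φ (dotProductChar ZMod.stdAddChar ∘ γ) ψ ∈ unitaryGroup (Fin q) ℂ) ↔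
      ∀ k, (of fun j p => (1 / Real.sqrt q : ℂ) * dft N (φ p) (k + γ j)) ∈
        unitaryGroup (Fin q) ℂ := by
  rw [(dotProductChar_bijective (ZMod.isPrimitive_stdAddChar N)).surjective.forall]
  simp [systemMatrix, dft_eq_charDFT]

theorem isONB_iff_exists_orthonormalBasis {ι : Type*} [Fintype ι] [DecidableEq ι]
    (b : ι → (Fin 2 → ZMod N) → ℂ) :
    IsONB N b ↔ ∃ v : OrthonormalBasis ι ℂ (EuclideanSpace ℂ (Fin 2 → ZMod N)),
      ⇑v = fun i => toLp 2 (b i) := by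
  have hortho : Orthonormal ℂ (fun i => toLp 2 (b i)) ↔
      ∀ i j, ip N (b i) (b j) = if i = j then 1 else 0 := by
    rw [orthonormal_iff_ite, forall_comm]
    refine forall₂_congr fun i j => ?_
    simp only [EuclideanSpace.inner_toLp_toLp, eq_comm (a := j)]
    rfl
  have hspan : Submodule.span ℂ (Set.range fun i => toLp 2 (b i)) = ⊤ ↔
      Submodule.span ℂ (Set.range b) = ⊤ := by
    let e := (WithLp.linearEquiv 2 ℂ ((Fin 2 → ZMod N) → ℂ)).symm
    rw [← Submodule.map_eq_top_iff (e := e) (p := Submodule.span ℂ (Set.range b)),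
      Submodule.map_span, ← Set.range_comp]
    rfl
  rw [IsONB, ← hortho, ← hspan]
  constructor
  · rintro ⟨hb, htop⟩
    exact ⟨.mk hb htop.ge, OrthonormalBasis.coe_mk hb htop.ge⟩
  · rintro ⟨v, hv⟩
    rw [← hv]
    exact ⟨v.orthonormal, v.coe_toBasis ▸ v.toBasis.span_eq⟩

end Plane

/-- Let `q = |det A| ≥ 2`, let `𝔇` be a digit set for `B`, let
`Φ = {φ₀, …, φ_{q−1}} ⊆ ℓ²(ℤ_N²)`, and fix a bijection `γ` from `{0,…,q−1}` onto
`C̄((ℤ/Nℤ)²)`, where `C = Bᵀ`.  Then `𝔅(Φ) = {T_{Āk} φ_p : k ∈ 𝔇, 0 ≤ p ≤ q−1}`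
is an orthonormal basis of `ℓ²(ℤ_N²)` if and only if for every `k ∈ (ℤ/Nℤ)²` the
`q×q` system matrix `S(k)` with entries `S(k)_{j,p} = (1/√q)·φ̂_p(k + γ(j))`
is unitary. -/
theorem onws_iff_system_matrix_unitary (N : ℕ) [NeZero N]
    (A B : Matrix (Fin 2) (Fin 2) ℤ) (hA : A.det ≠ 0)
    (hB : A * B = (N : ℤ) • (1 : Matrix (Fin 2) (Fin 2) ℤ))
    (hq : 2 ≤ A.det.natAbs)
    (D : Finset (Fin 2 → ZMod N)) (hD : IsDigitRep N B D)
    (hinj : Set.InjOn (matBar N A) D)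
    (φ : Fin (A.det.natAbs) → ((Fin 2 → ZMod N) → ℂ))
    (γ : Fin (A.det.natAbs) → (Fin 2 → ZMod N))
    (hγinj : Function.Injective γ)
    (hγrange : Set.range γ = Set.range (matBar N B.transpose)) :
    IsONB N (fun kp : ↥D × Fin (A.det.natAbs) =>
        transl N (matBar N A ↑kp.1) (φ kp.2)) ↔
      ∀ k : Fin 2 → ZMod N,
        (Matrix.of fun j p : Fin (A.det.natAbs) =>
            (1 / Real.sqrt (A.det.natAbs) : ℂ) * dft N (φ p) (k + γ j)) ∈
          Matrix.unitaryGroup (Fin (A.det.natAbs)) ℂ := by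
  have he := ZMod.isPrimitive_stdAddChar N
  let H := (A.map (Int.cast : ℤ → ZMod N)).mulVecLin.toAddMonoidHom.range
  have hγ : Set.range (dotProductChar ZMod.stdAddChar ∘ γ) = charAnnihilator H := by
    rw [Set.range_comp, hγrange, dotProductChar_image_range_matBar_transpose hB]
  rw [isONB_iff_exists_orthonormalBasis, ← forall_systemMatrix_mem_unitaryGroup_iff_forall_dft]
  exact onws_iff_system_matrix_unitary_general (H := H) (α := fun k : D => matBar N A k)
    hinj.injective (hD.range_matBar (exact_matBar hB)) ((dotProductChar_injective he).comp hγinj)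
    hγ φ
end

section
/- Let V be a finite-dimensional complex inner product space and let (b_i)_{i∈I} and (c_j)_{j∈J} be two orthonormal bases of V (with I, J finite). Set μ := max{|⟨b_i, c_j⟩| : i ∈ I, j ∈ J}. Then: (a) μ ≥ 1/√(dim V); and (b) for every nonzero f ∈ V, (#{i ∈ I : ⟨f, b_i⟩ ≠ 0})·(#{j ∈ J : ⟨f, c_j⟩ ≠ 0}) ≥ 1/μ². -/
open scoped InnerProductSpace

/-!
Parseval's identity for a unit vector of one basis in the other basis gives `1 ≤ (dim V) μ²`.

For `f` with supports `A` and `B` in the two bases, expanding `f` in the first basis and applying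
Cauchy–Schwarz over `A` bounds every coefficient of `f` in the second basis by `μ √|A| ‖f‖`.
Summing the squares over `B`, Parseval's identity yields `‖f‖² ≤ |B| |A| μ² ‖f‖²`.
-/

section Support

variable {ι M R : Type*} [Fintype ι]

theorem sum_le_ncard_support_nsmul [AddCommMonoid M] [PartialOrder M] [IsOrderedAddMonoid M]
    {a : ι → M} {C : M} (ha : ∀ i ∈ Function.support a, a i ≤ C) :
    ∑ i, a i ≤ (Function.support a).ncard • C := by
  classical
  rw [Set.ncard_eq_toFinset_card', Function.support, Set.toFinset_ofPred]
  calc ∑ i, a i = ∑ i with a i ≠ 0, a i := (Finset.sum_filter_ne_zero _).symm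
    _ ≤ Finset.card {i | a i ≠ 0} • C :=
      Finset.sum_le_card_nsmul _ _ _ fun i hi => ha i (Finset.mem_filter.mp hi).2

theorem sq_sum_le_ncard_support_mul_sum_sq [Semiring R] [LinearOrder R] [IsStrictOrderedRing R]
    [ExistsAddOfLE R] (a : ι → R) :
    (∑ i, a i) ^ 2 ≤ (Function.support a).ncard * ∑ i, a i ^ 2 := by
  classical
  rw [Set.ncard_eq_toFinset_card', Function.support, Set.toFinset_ofPred]
  calc (∑ i, a i) ^ 2 = (∑ i with a i ≠ 0, a i) ^ 2 := by rw [Finset.sum_filter_ne_zero]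
    _ ≤ Finset.card {i | a i ≠ 0} * ∑ i with a i ≠ 0, a i ^ 2 := sq_sum_le_card_mul_sum_sq
    _ = Finset.card {i | a i ≠ 0} * ∑ i, a i ^ 2 := by
      rw [Finset.sum_filter_of_ne fun i _ => ne_zero_pow two_ne_zero]

end Support

section OrthonormalBases

variable {𝕜 V I J : Type*} [RCLike 𝕜] [NormedAddCommGroup V] [InnerProductSpace 𝕜 V]
  [Fintype I] [Fintype J] {μ : ℝ}

theorem norm_inner_le_sum_norm_inner_mul (b : OrthonormalBasis I 𝕜 V) {x : V}
    (hx : ∀ i, ‖⟪b i, x⟫_𝕜‖ ≤ μ) (f : V) :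
    ‖⟪f, x⟫_𝕜‖ ≤ (∑ i, ‖⟪f, b i⟫_𝕜‖) * μ :=
  calc ‖⟪f, x⟫_𝕜‖ = ‖∑ i, ⟪f, b i⟫_𝕜 * ⟪b i, x⟫_𝕜‖ := by rw [b.sum_inner_mul_inner]
    _ ≤ ∑ i, ‖⟪f, b i⟫_𝕜‖ * ‖⟪b i, x⟫_𝕜‖ := by
      simpa only [norm_mul] using norm_sum_le Finset.univ fun i => ⟪f, b i⟫_𝕜 * ⟪b i, x⟫_𝕜
    _ ≤ ∑ i, ‖⟪f, b i⟫_𝕜‖ * μ := by gcongr with i; exact hx i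
    _ = (∑ i, ‖⟪f, b i⟫_𝕜‖) * μ := (Finset.sum_mul ..).symm

theorem sq_sum_norm_inner_le_ncard_inner_ne_zero_mul (b : OrthonormalBasis I 𝕜 V) (f : V) :
    (∑ i, ‖⟪f, b i⟫_𝕜‖) ^ 2 ≤ {i | ⟪f, b i⟫_𝕜 ≠ 0}.ncard * ‖f‖ ^ 2 := by
  simpa only [Function.support, norm_ne_zero_iff, b.sum_sq_norm_inner_left]
    using sq_sum_le_ncard_support_mul_sum_sq fun i => ‖⟪f, b i⟫_𝕜‖

theorem norm_sq_le_ncard_inner_ne_zero_mul (c : OrthonormalBasis J 𝕜 V) {f : V} {C : ℝ}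
    (hf : ∀ j, ‖⟪f, c j⟫_𝕜‖ ^ 2 ≤ C) :
    ‖f‖ ^ 2 ≤ {j | ⟪f, c j⟫_𝕜 ≠ 0}.ncard * C := by
  simpa only [Function.support, ne_eq, sq_eq_zero_iff, norm_eq_zero, c.sum_sq_norm_inner_left,
    nsmul_eq_mul] using sum_le_ncard_support_nsmul fun j _ => hf j

theorem one_le_ncard_inner_ne_zero_mul_ncard_mul_sq
    (b : OrthonormalBasis I 𝕜 V) (c : OrthonormalBasis J 𝕜 V)
    (hμ : ∀ i j, ‖⟪b i, c j⟫_𝕜‖ ≤ μ) {f : V} (hf : f ≠ 0) :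
    1 ≤ ({i | ⟪f, b i⟫_𝕜 ≠ 0}.ncard : ℝ) * {j | ⟪f, c j⟫_𝕜 ≠ 0}.ncard * μ ^ 2 := by
  set A := ({i | ⟪f, b i⟫_𝕜 ≠ 0}.ncard : ℝ)
  set B := ({j | ⟪f, c j⟫_𝕜 ≠ 0}.ncard : ℝ)
  have coeff_le (j : J) : ‖⟪f, c j⟫_𝕜‖ ^ 2 ≤ A * ‖f‖ ^ 2 * μ ^ 2 :=
    calc ‖⟪f, c j⟫_𝕜‖ ^ 2 ≤ ((∑ i, ‖⟪f, b i⟫_𝕜‖) * μ) ^ 2 := by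
          gcongr; exact norm_inner_le_sum_norm_inner_mul b (hμ · j) f
      _ = (∑ i, ‖⟪f, b i⟫_𝕜‖) ^ 2 * μ ^ 2 := mul_pow ..
      _ ≤ A * ‖f‖ ^ 2 * μ ^ 2 := by
          gcongr; exact sq_sum_norm_inner_le_ncard_inner_ne_zero_mul b f
  have norm_sq_pos : 0 < ‖f‖ ^ 2 := by positivity
  refine le_of_mul_le_mul_right ?_ norm_sq_pos
  calc 1 * ‖f‖ ^ 2 ≤ B * (A * ‖f‖ ^ 2 * μ ^ 2) := by
        simpa only [one_mul] using norm_sq_le_ncard_inner_ne_zero_mul c coeff_le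
    _ = A * B * μ ^ 2 * ‖f‖ ^ 2 := by ring

theorem norm_le_sqrt_finrank_mul (c : OrthonormalBasis J 𝕜 V) {x : V}
    (hx : ∀ j, ‖⟪c j, x⟫_𝕜‖ ≤ μ) :
    ‖x‖ ≤ √(Module.finrank 𝕜 V) * μ := by
  rw [Module.finrank_eq_card_basis c.toBasis]
  have norm_le := c.norm_le_card_mul_iSup_norm_inner x
  rcases isEmpty_or_nonempty J with _ | _
  · simpa using norm_le
  · exact norm_le.trans (mul_le_mul_of_nonneg_left (ciSup_le hx) (Real.sqrt_nonneg _))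

end OrthonormalBases

theorem two_basis_uncertainty_general {𝕜 V I J : Type*} [RCLike 𝕜] [NormedAddCommGroup V]
    [InnerProductSpace 𝕜 V] [Fintype I] [Fintype J]
    (b : OrthonormalBasis I 𝕜 V) (c : OrthonormalBasis J 𝕜 V) {μ : ℝ}
    (hμ : IsGreatest {x : ℝ | ∃ (i : I) (j : J), x = ‖⟪b i, c j⟫_𝕜‖} μ) :
    1 / √(Module.finrank 𝕜 V) ≤ μ ∧
    ∀ f : V, f ≠ 0 →
      1 / μ ^ 2 ≤
        ({i : I | ⟪f, b i⟫_𝕜 ≠ 0}.ncard : ℝ) * ({j : J | ⟪f, c j⟫_𝕜 ≠ 0}.ncard : ℝ) := by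
  obtain ⟨⟨i, j, rfl⟩, inner_mem_le⟩ := hμ
  set μ := ‖⟪b i, c j⟫_𝕜‖
  have inner_le (i j) : ‖⟪b i, c j⟫_𝕜‖ ≤ μ := inner_mem_le ⟨i, j, rfl⟩
  have one_le : 1 ≤ √(Module.finrank 𝕜 V) * μ := by
    simpa only [c.norm_eq_one] using norm_le_sqrt_finrank_mul b (inner_le · j)
  exact ⟨div_le_of_le_mul₀ (Real.sqrt_nonneg _) (norm_nonneg _) (by rwa [mul_comm]),
    fun f hf => div_le_of_le_mul₀ (sq_nonneg μ) (by positivity)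
      (one_le_ncard_inner_ne_zero_mul_ncard_mul_sq b c inner_le hf)⟩

/-- Let `V` be a finite-dimensional complex inner product space with orthonormal
bases `(b_i)_{i∈I}` and `(c_j)_{j∈J}`, and let
`μ = max{|⟨b_i, c_j⟩| : i ∈ I, j ∈ J}`.  Then `μ ≥ 1/√(dim V)`, and for every
nonzero `f ∈ V` the numbers of nonzero coefficients of `f` in the two bases
satisfy `(#{i : ⟨f, b_i⟩ ≠ 0})·(#{j : ⟨f, c_j⟩ ≠ 0}) ≥ 1/μ²`. -/
theorem two_basis_uncertainty (V : Type*) [NormedAddCommGroup V]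
    [InnerProductSpace ℂ V] [FiniteDimensional ℂ V]
    (I J : Type*) [Fintype I] [Fintype J]
    (b : OrthonormalBasis I ℂ V) (c : OrthonormalBasis J ℂ V)
    (μ : ℝ)
    (hμ : IsGreatest {x : ℝ | ∃ (i : I) (j : J), x = ‖⟪b i, c j⟫_ℂ‖} μ) :
    1 / Real.sqrt (Module.finrank ℂ V) ≤ μ ∧
    ∀ f : V, f ≠ 0 →
      1 / μ ^ 2 ≤
        ({i : I | ⟪f, b i⟫_ℂ ≠ 0}.ncard : ℝ) * ({j : J | ⟪f, c j⟫_ℂ ≠ 0}.ncard : ℝ) := by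
  exact two_basis_uncertainty_general b c hμ
end
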